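/- Let G be a group, K a subgroup of G, (ρ, V) a representation of K on a complex vector space V, and χ : K → ℂˣ a homomorphism trivial on ⁅G,K⁆ ∩ K (a 'G-normal' character of K). Let ρ ⊗ χ denote the twisted representation (ρ ⊗ χ)(k) = χ(k) • ρ(k). Then for every h ∈ G there is a set-theoretic identity of intertwining spaces I_h(ρ) = I_h(ρ ⊗ χ): a linear map Λ : V → V satisfies ρ(x) ∘ Λ = Λ ∘ ρ(h⁻¹ x h) for all x ∈ K ∩ hKh⁻¹ if and only if it satisfies (ρ⊗χ)(x) ∘ Λ = Λ ∘ (ρ⊗χ)(h⁻¹ x h) for all x ∈ K ∩ hKh⁻¹. -/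

import Mathlib

/-!
For `x ∈ K ∩ hKh⁻¹` the elements `h⁻¹ x h` and `x` of `K` differ by a commutator in `⁅G, K⁆ ∩ K`, so
`χ` takes the same value on both. Twisting therefore multiplies the two sides of the intertwining
relation at `x` by the same unit, which can be cancelled.
-/

theorem map_eq_of_isConj_of_commutator_le_ker
    {G M : Type*} [Group G] [MulOneClass M] {K : Subgroup G} {χ : K →* M}
    (hχ : ⁅(⊤ : Subgroup G), K⁆.subgroupOf K ≤ χ.ker) {x y : K} (hxy : IsConj (x : G) y) :
    χ x = χ y := by
  obtain ⟨g, hg⟩ := isConj_iff.mp hxy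
  have hcomm : y * x⁻¹ ∈ ⁅(⊤ : Subgroup G), K⁆.subgroupOf K := by
    rw [Subgroup.mem_subgroupOf, Subgroup.coe_mul, Subgroup.coe_inv, ← hg]
    exact Subgroup.commutator_mem_commutator (Subgroup.mem_top g) x.2
  calc
    χ x = χ (y * x⁻¹) * χ x := by rw [MonoidHom.mem_ker.mp (hχ hcomm), one_mul]
    _ = χ y := by rw [← map_mul, inv_mul_cancel_right]

section Intertwining

variable {k V W : Type*} [CommSemiring k] [AddCommMonoid V] [Module k V]
  [AddCommMonoid W] [Module k W]

/-- The representation `ρ ⊗ χ`, realised on the space `V` of `ρ` itself by identifying `V ⊗ k`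
with `V`. -/
def twistByCharacter {H : Type*} [Monoid H] (ρ : Representation k H V) (χ : H →* kˣ) :
    Representation k H V where
  toFun g := χ g • ρ g
  map_one' := by rw [map_one, map_one, one_smul]
  map_mul' g g' := by rw [map_mul, map_mul, smul_mul_smul_comm]

theorem twistByCharacter_apply {H : Type*} [Monoid H] (ρ : Representation k H V) (χ : H →* kˣ)
    (g : H) : twistByCharacter ρ χ g = χ g • ρ g :=
  rfl

variable {G : Type*} [Group G] {K : Subgroup G}

/-- The space of linear maps from `V` to `W` that intertwine the `h`-conjugate of `ρ` with `σ` on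
`K ∩ hKh⁻¹`; for `σ = ρ` it is the space `I_h(ρ)`. Membership of `x` in `hKh⁻¹` is expressed as
`h⁻¹ * x * h ∈ K`. -/
def intertwiningSpace (ρ : Representation k K V) (σ : Representation k K W) (h : G) :
    Submodule k (V →ₗ[k] W) where
  carrier := {Λ | ∀ (x : G) (hx : x ∈ K) (hx' : h⁻¹ * x * h ∈ K),
    σ ⟨x, hx⟩ ∘ₗ Λ = Λ ∘ₗ ρ ⟨h⁻¹ * x * h, hx'⟩}
  zero_mem' _ _ _ := by rw [LinearMap.comp_zero, LinearMap.zero_comp]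
  add_mem' hΛ hΛ' x hx hx' := by
    rw [LinearMap.comp_add, LinearMap.add_comp, hΛ x hx hx', hΛ' x hx hx']
  smul_mem' c _ hΛ x hx hx' := by
    rw [LinearMap.comp_smul, LinearMap.smul_comp, hΛ x hx hx']

theorem mem_intertwiningSpace {ρ : Representation k K V} {σ : Representation k K W} {h : G}
    {Λ : V →ₗ[k] W} :
    Λ ∈ intertwiningSpace ρ σ h ↔ ∀ (x : G) (hx : x ∈ K) (hx' : h⁻¹ * x * h ∈ K),
      σ ⟨x, hx⟩ ∘ₗ Λ = Λ ∘ₗ ρ ⟨h⁻¹ * x * h, hx'⟩ :=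
  Iff.rfl

theorem intertwining_eq_of_twist_by_normal_char_general
    (ρ : Representation k K V) (σ : Representation k K W) {χ : K →* kˣ}
    (hχ : ⁅(⊤ : Subgroup G), K⁆.subgroupOf K ≤ χ.ker) (h : G) :
    intertwiningSpace (twistByCharacter ρ χ) (twistByCharacter σ χ) h =
      intertwiningSpace ρ σ h := by
  ext Λ
  rw [mem_intertwiningSpace, mem_intertwiningSpace]
  refine forall₃_congr fun x hx hx' ↦ ?_
  have hconj : IsConj (h⁻¹ * x * h) x := isConj_iff.mpr ⟨h, by group⟩
  have hχ_eq : χ ⟨h⁻¹ * x * h, hx'⟩ = χ ⟨x, hx⟩ :=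
    map_eq_of_isConj_of_commutator_le_ker hχ hconj
  rw [twistByCharacter_apply, twistByCharacter_apply, hχ_eq, LinearMap.smul_comp,
    LinearMap.comp_smul, smul_left_cancel_iff]

end Intertwining

/-- Twisting a representation of a subgroup `K ≤ G` by a `G`-normal character `χ` of `K`
(i.e. a character trivial on `⁅G,K⁆ ∩ K`) does not change the intertwining spaces:
for every `h ∈ G`, a linear map `Λ` intertwines `ρ` and its `h`-conjugate on `K ∩ hKh⁻¹`
if and only if it intertwines `ρ ⊗ χ` and its `h`-conjugate there. -/
theorem intertwining_eq_of_twist_by_normal_char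
    {G : Type*} [Group G] (K : Subgroup G)
    {V : Type*} [AddCommGroup V] [Module ℂ V]
    (ρ : Representation ℂ K V) (χ : K →* ℂˣ)
    (hχ : ∀ x (hx : x ∈ ⁅(⊤ : Subgroup G), K⁆ ⊓ K), χ ⟨x, hx.2⟩ = 1) :
    ∀ (h : G) (Λ : V →ₗ[ℂ] V),
      (∀ (x : G) (hx : x ∈ K) (hx' : h⁻¹ * x * h ∈ K),
          (ρ ⟨x, hx⟩) ∘ₗ Λ = Λ ∘ₗ (ρ ⟨h⁻¹ * x * h, hx'⟩)) ↔
      (∀ (x : G) (hx : x ∈ K) (hx' : h⁻¹ * x * h ∈ K),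
          ((χ ⟨x, hx⟩ : ℂ) • ρ ⟨x, hx⟩) ∘ₗ Λ
            = Λ ∘ₗ ((χ ⟨h⁻¹ * x * h, hx'⟩ : ℂ) • ρ ⟨h⁻¹ * x * h, hx'⟩)) :=
  fun h _ ↦ (SetLike.ext_iff.mp (intertwining_eq_of_twist_by_normal_char_general ρ ρ
    (fun x hx ↦ hχ x ⟨hx, x.2⟩) h) _).symm
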